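/- arXiv:2503.03086 — 4 statements merged into one kernel-verified Lean document; each statement's English description precedes it below -/
import Mathlib

section
/- Let ρ and ρ̃ be finite positive Borel measures on ℝ, and let W, W̃ : ℝ → M₂(ℂ) be Borel functions such that W(x) is positive semidefinite with trace 1 for ρ-a.e. x and W̃(x) is positive semidefinite with trace 1 for ρ̃-a.e. x. Assume ∫ e^{ε|x|} dρ(x) < ∞ for some ε > 0, assume ∫ |x|^k dρ̃(x) < ∞ for every k ∈ ℕ, and assume that all moments agree: ∫ x^k W(x) dρ(x) = ∫ x^k W̃(x) dρ̃(x) (entrywise) for every k ∈ ℕ₀. Then the matrix measures coincide: for every Borel set B ⊆ ℝ and all indices i, j ∈ {0,1}, ∫_B W(x)_{ij} dρ(x) = ∫_B W̃(x)_{ij} dρ̃(x). -/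
open MeasureTheory ComplexConjugate
open scoped ComplexOrder

/-!
If `μ` has exponential tails and `ν` has the same moments, then summing the power series of `cosh`,
whose terms `(t x) ^ (2 n) / (2 n)!` are nonnegative, shows that `ν` has the same exponential tails.
Both complex moment generating functions are then holomorphic on a strip around the imaginary axis
and have the same Taylor coefficients at `0`, so the characteristic functions agree and `μ = ν`.

If all moments of a real density `g` vanish, this applies to the measures with densities `g⁺` and
`g⁻` and gives `g = 0`; vector-valued densities reduce to real ones by duality.

For matrix measures the trace condition recovers the moments of `ρ` as the traces of the matrix
moments, so `ρ = ρ'`. Positivity bounds the entries of `W` and `W'` by their trace, so the entries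
inherit the exponential tails of `ρ` and are determined by their moments.
-/

section ExpTails

variable {E : Type*} [NormedAddCommGroup E] [NormedSpace ℝ E] {μ : Measure ℝ} {ε : ℝ}

lemma norm_pow_mul_exp_neg_mul_abs_le (hε : 0 < ε) (k : ℕ) (x : ℝ) :
    ‖x ^ k * Real.exp (-(ε * |x|))‖ ≤ k.factorial / ε ^ k := by
  have hexp := Real.pow_div_factorial_le_exp (ε * |x|) (by positivity) k
  rw [mul_pow, div_le_iff₀ (by positivity)] at hexp
  rw [Real.exp_neg, ← div_eq_mul_inv, norm_div, norm_pow, Real.norm_eq_abs,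
    Real.norm_of_nonneg (Real.exp_nonneg _), div_le_div_iff₀ (by positivity) (by positivity)]
  linarith

lemma integrable_pow_smul_of_integrable_exp_mul_abs_smul (hε : 0 < ε) {f : ℝ → E}
    (hf : Integrable (fun x ↦ Real.exp (ε * |x|) • f x) μ) (k : ℕ) :
    Integrable (fun x ↦ x ^ k • f x) μ := by
  convert! hf.bdd_smul (φ := fun x ↦ x ^ k * Real.exp (-(ε * |x|))) _ (by fun_prop)
    (.of_forall (norm_pow_mul_exp_neg_mul_abs_le hε k)) using 2 with x
  rw [Pi.smul_apply', smul_smul, mul_assoc, ← Real.exp_add, neg_add_cancel, Real.exp_zero, mul_one]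

lemma integrable_pow_of_integrable_exp_mul_abs (hε : 0 < ε)
    (hμ : Integrable (fun x ↦ Real.exp (ε * |x|)) μ) (k : ℕ) :
    Integrable (fun x ↦ x ^ k) μ := by
  simpa using integrable_pow_smul_of_integrable_exp_mul_abs_smul (f := fun _ ↦ (1 : ℝ)) hε
    (by simpa using hμ) k

lemma integrable_exp_mul_abs_iff_integrable_cosh (hε : 0 ≤ ε) :
    Integrable (fun x ↦ Real.exp (ε * |x|)) μ ↔ Integrable (fun x ↦ Real.cosh (ε * x)) μ := by
  have cosh_eq (x : ℝ) : Real.cosh (ε * x) =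
      (Real.exp (ε * |x|) + Real.exp (-(ε * |x|))) / 2 := by
    rw [← Real.cosh_abs, abs_mul, abs_of_nonneg hε, Real.cosh_eq]
  refine ⟨fun h ↦ h.mono' (by fun_prop) (.of_forall fun x ↦ ?_),
    fun h ↦ (h.const_mul 2).mono' (by fun_prop) (.of_forall fun x ↦ ?_)⟩
  · have : Real.exp (-(ε * |x|)) ≤ Real.exp (ε * |x|) :=
      Real.exp_le_exp.2 (neg_le_self (by positivity))
    rw [Real.norm_of_nonneg (Real.cosh_pos _).le, cosh_eq]
    linarith
  · rw [Real.norm_of_nonneg (Real.exp_nonneg _), cosh_eq]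
    linarith [Real.exp_nonneg (-(ε * |x|))]

lemma zero_mem_interior_integrableExpSet_id (hε : 0 < ε)
    (hμ : Integrable (fun x ↦ Real.exp (ε * |x|)) μ) :
    0 ∈ interior (ProbabilityTheory.integrableExpSet id μ) := by
  refine mem_interior.2 ⟨Set.Ioo (-ε) ε, fun t ht ↦ ?_, isOpen_Ioo, by simpa using hε⟩
  refine hμ.mono' (by fun_prop) (.of_forall fun x ↦ ?_)
  rw [Real.norm_of_nonneg (Real.exp_nonneg _), Real.exp_le_exp]
  calc t * id x ≤ |t| * |x| := (le_abs_self _).trans_eq (abs_mul _ _)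
    _ ≤ ε * |x| := by gcongr; exact (abs_lt.2 ht).le

end ExpTails

section Moments

open ProbabilityTheory

variable {μ ν : Measure ℝ}

lemma lintegral_cosh_mul_eq_tsum (hμ : ∀ n : ℕ, Integrable (fun x ↦ x ^ (2 * n)) μ) (t : ℝ) :
    ∫⁻ x, ENNReal.ofReal (Real.cosh (t * x)) ∂μ =
      ∑' n : ℕ, ENNReal.ofReal (t ^ (2 * n) / (2 * n).factorial * ∫ x, x ^ (2 * n) ∂μ) := by
  have term_nonneg (n : ℕ) (x : ℝ) : 0 ≤ t ^ (2 * n) / (2 * n).factorial * x ^ (2 * n) := by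
    rw [pow_mul, pow_mul x]; positivity
  have hasSum_cosh (x : ℝ) : HasSum
      (fun n : ℕ ↦ t ^ (2 * n) / (2 * n).factorial * x ^ (2 * n)) (Real.cosh (t * x)) := by
    simpa only [mul_pow, mul_div_right_comm] using Real.hasSum_cosh (t * x)
  calc ∫⁻ x, ENNReal.ofReal (Real.cosh (t * x)) ∂μ
      = ∫⁻ x, ∑' n : ℕ, ENNReal.ofReal (t ^ (2 * n) / (2 * n).factorial * x ^ (2 * n)) ∂μ := by
        congr! with x
        rw [← (hasSum_cosh x).tsum_eq,
          ENNReal.ofReal_tsum_of_nonneg (term_nonneg · x) (hasSum_cosh x).summable]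
    _ = ∑' n : ℕ, ∫⁻ x, ENNReal.ofReal (t ^ (2 * n) / (2 * n).factorial * x ^ (2 * n)) ∂μ :=
        lintegral_tsum fun n ↦ by fun_prop
    _ = _ := by
        congr! with n
        rw [← integral_const_mul, ofReal_integral_eq_lintegral_ofReal ((hμ _).const_mul _)
          (.of_forall (term_nonneg n))]

lemma integrable_cosh_of_even_moments_eq (hμ : ∀ n : ℕ, Integrable (fun x ↦ x ^ (2 * n)) μ)
    (hν : ∀ n : ℕ, Integrable (fun x ↦ x ^ (2 * n)) ν)
    (h : ∀ n : ℕ, ∫ x, x ^ (2 * n) ∂μ = ∫ x, x ^ (2 * n) ∂ν)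
    {t : ℝ} (ht : Integrable (fun x ↦ Real.cosh (t * x)) μ) :
    Integrable (fun x ↦ Real.cosh (t * x)) ν := by
  have cosh_nonneg (x : ℝ) : 0 ≤ Real.cosh (t * x) := (Real.cosh_pos _).le
  refine ⟨by fun_prop, (hasFiniteIntegral_iff_ofReal (.of_forall cosh_nonneg)).2 ?_⟩
  rw [lintegral_cosh_mul_eq_tsum hν]
  simp_rw [← h]
  rw [← lintegral_cosh_mul_eq_tsum hμ]
  exact (hasFiniteIntegral_iff_ofReal (.of_forall cosh_nonneg)).1 ht.2

lemma eventuallyEq_of_iteratedDeriv_eq {𝕜 F : Type*} [NontriviallyNormedField 𝕜] [CharZero 𝕜]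
    [NormedAddCommGroup F] [NormedSpace 𝕜 F] [CompleteSpace F] {f g : 𝕜 → F} {z : 𝕜}
    (hf : AnalyticAt 𝕜 f z) (hg : AnalyticAt 𝕜 g z)
    (h : ∀ n, iteratedDeriv n f z = iteratedDeriv n g z) : f =ᶠ[nhds z] g := by
  rw [Filter.eventuallyEq_iff_sub]
  refine analyticOrderAt_eq_top.1 (ENat.eq_top_iff_forall_ge.2 fun n ↦ ?_)
  rw [natCast_le_analyticOrderAt_iff_iteratedDeriv_eq_zero (hf.sub hg)]
  intro k _
  rw [iteratedDeriv_sub hf.contDiffAt hg.contDiffAt, h k, sub_self]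

lemma eqOn_complexMGF_of_moments_eq {Ω Ω' : Type*} {mΩ : MeasurableSpace Ω}
    {mΩ' : MeasurableSpace Ω'} {P : Measure Ω} {P' : Measure Ω'} {X : Ω → ℝ} {Y : Ω' → ℝ}
    (hX : 0 ∈ interior (integrableExpSet X P)) (hY : 0 ∈ interior (integrableExpSet Y P'))
    (h : ∀ k : ℕ, P[X ^ k] = P'[Y ^ k]) :
    Set.EqOn (complexMGF X P) (complexMGF Y P')
      {z | z.re ∈ interior (integrableExpSet X P) ∩ interior (integrableExpSet Y P')} := by
  refine AnalyticOnNhd.eqOn_of_preconnected_of_eventuallyEq (z₀ := 0)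
    (fun z hz ↦ analyticAt_complexMGF hz.1) (fun z hz ↦ analyticAt_complexMGF hz.2)
    ((convex_integrableExpSet.interior.inter convex_integrableExpSet.interior).linear_preimage
      Complex.reLm).isPreconnected ⟨hX, hY⟩ ?_
  refine eventuallyEq_of_iteratedDeriv_eq (analyticAt_complexMGF hX) (analyticAt_complexMGF hY)
    fun k ↦ ?_
  rw [iteratedDeriv_complexMGF hX, iteratedDeriv_complexMGF hY]
  simpa [← Complex.ofReal_pow, integral_complex_ofReal] using h k

lemma measure_eq_of_moments_eq {ε : ℝ} (hε : 0 < ε)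
    (hμ : Integrable (fun x ↦ Real.exp (ε * |x|)) μ)
    (hν : ∀ k : ℕ, Integrable (fun x ↦ x ^ k) ν)
    (h : ∀ k : ℕ, ∫ x, x ^ k ∂μ = ∫ x, x ^ k ∂ν) : μ = ν := by
  have hμ_pow := integrable_pow_of_integrable_exp_mul_abs hε hμ
  have hν_exp : Integrable (fun x ↦ Real.exp (ε * |x|)) ν := by
    rw [integrable_exp_mul_abs_iff_integrable_cosh hε.le] at hμ ⊢
    exact integrable_cosh_of_even_moments_eq (fun _ ↦ hμ_pow _) (fun _ ↦ hν _) (fun _ ↦ h _) hμ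
  have : IsFiniteMeasure μ :=
    (integrable_const_iff_isFiniteMeasure one_ne_zero).1 (by simpa only [pow_zero] using hμ_pow 0)
  have : IsFiniteMeasure ν :=
    (integrable_const_iff_isFiniteMeasure one_ne_zero).1 (by simpa only [pow_zero] using hν 0)
  have hμ_zero := zero_mem_interior_integrableExpSet_id hε hμ
  have hν_zero := zero_mem_interior_integrableExpSet_id hε hν_exp
  refine Measure.ext_of_charFun (funext fun t ↦ ?_)
  rw [← complexMGF_id_mul_I, ← complexMGF_id_mul_I]
  exact eqOn_complexMGF_of_moments_eq hμ_zero hν_zero h (by simpa using ⟨hμ_zero, hν_zero⟩)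

end Moments

section WithDensity

variable {α : Type*} {m : MeasurableSpace α} {μ : Measure α} {f g : α → ℝ}

lemma integrable_withDensity_ofReal (hg : AEMeasurable g μ) (hf : AEStronglyMeasurable f μ)
    (hgf : Integrable (fun x ↦ g x * f x) μ) :
    Integrable f (μ.withDensity fun x ↦ ENNReal.ofReal (g x)) := by
  rw [integrable_withDensity_iff_integrable_smul₀' hg.ennreal_ofReal (by simp)]
  refine hgf.mono (hg.ennreal_ofReal.ennreal_toReal.aestronglyMeasurable.smul hf)
    (.of_forall fun x ↦ ?_)
  rw [ENNReal.toReal_ofReal', norm_smul, norm_mul]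
  gcongr
  exact abs_max_le_max_abs_abs.trans (by simp)

lemma integral_withDensity_ofReal_sub_neg (hg : AEMeasurable g μ) (hf : AEStronglyMeasurable f μ)
    (hgf : Integrable (fun x ↦ g x * f x) μ) :
    ∫ x, f x ∂μ.withDensity (fun x ↦ ENNReal.ofReal (g x)) -
      ∫ x, f x ∂μ.withDensity (fun x ↦ ENNReal.ofReal (-g x)) = ∫ x, g x * f x ∂μ := by
  have hpos := integrable_withDensity_ofReal hg hf hgf
  have hneg : Integrable f (μ.withDensity fun x ↦ ENNReal.ofReal (-g x)) :=
    integrable_withDensity_ofReal hg.neg hf (by simpa using hgf.neg)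
  rw [integrable_withDensity_iff_integrable_smul₀' (by fun_prop) (by simp)] at hpos hneg
  rw [integral_withDensity_eq_integral_toReal_smul₀ (by fun_prop) (by simp),
    integral_withDensity_eq_integral_toReal_smul₀ (by fun_prop) (by simp),
    ← integral_sub hpos hneg]
  refine integral_congr_ae (.of_forall fun x ↦ ?_)
  dsimp only
  rw [ENNReal.toReal_ofReal', ENNReal.toReal_ofReal', ← sub_smul, max_zero_sub_eq_self,
    smul_eq_mul]

lemma ae_eq_zero_of_withDensity_ofReal_eq_neg (hg : Integrable g μ)
    (h : μ.withDensity (fun x ↦ ENNReal.ofReal (g x)) =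
      μ.withDensity fun x ↦ ENNReal.ofReal (-g x)) : g =ᵐ[μ] 0 := by
  have hg_meas := hg.aemeasurable
  rw [withDensity_eq_iff (by fun_prop) (by fun_prop) hg.lintegral_lt_top.ne] at h
  filter_upwards [h] with x hx
  have := congrArg ENNReal.toReal hx
  rwa [ENNReal.toReal_ofReal', ENNReal.toReal_ofReal', ← sub_eq_zero, max_zero_sub_eq_self]
    at this

end WithDensity

section VectorDensity

variable {E : Type*} [NormedAddCommGroup E] [NormedSpace ℝ E] [CompleteSpace E]
  {μ : Measure ℝ} {ε : ℝ}

lemma ae_eq_zero_of_integral_pow_mul_eq_zero (hε : 0 < ε) {g : ℝ → ℝ}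
    (hg : Integrable (fun x ↦ Real.exp (ε * |x|) * g x) μ)
    (h : ∀ k : ℕ, ∫ x, x ^ k * g x ∂μ = 0) : g =ᵐ[μ] 0 := by
  have hg_pow := integrable_pow_smul_of_integrable_exp_mul_abs_smul hε hg
  have hg_int : Integrable g μ := by simpa using hg_pow 0
  have hg_meas := hg_int.aemeasurable
  refine ae_eq_zero_of_withDensity_ofReal_eq_neg hg_int (measure_eq_of_moments_eq hε ?_ ?_ ?_)
  · exact integrable_withDensity_ofReal hg_meas (by fun_prop) (by simpa only [mul_comm] using hg)
  · exact fun k ↦ integrable_withDensity_ofReal hg_meas.neg (by fun_prop)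
      (by simpa [mul_comm] using (hg_pow k).neg)
  · intro k
    rw [← sub_eq_zero, integral_withDensity_ofReal_sub_neg hg_meas (by fun_prop)
      (by simpa [mul_comm] using hg_pow k), ← h k]
    simp only [mul_comm]

lemma ae_eq_zero_of_integral_pow_smul_eq_zero (hε : 0 < ε) {f : ℝ → E}
    (hf : Integrable (fun x ↦ Real.exp (ε * |x|) • f x) μ)
    (h : ∀ k : ℕ, ∫ x, x ^ k • f x ∂μ = 0) : f =ᵐ[μ] 0 := by
  have hf_pow := integrable_pow_smul_of_integrable_exp_mul_abs_smul hε hf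
  have hf_int : Integrable f μ := by simpa using hf_pow 0
  obtain ⟨t, ht_sep, ht⟩ := hf_int.aestronglyMeasurable.isSeparable_ae_range
  refine ae_eq_zero_of_forall_dual_of_isSeparable ℝ ht_sep (fun L ↦ ?_) ht
  refine ae_eq_zero_of_integral_pow_mul_eq_zero hε ?_ fun k ↦ ?_
  · simpa using L.integrable_comp hf
  · simpa [h k] using L.integral_comp_comm (hf_pow k)

lemma ae_eq_of_integral_pow_smul_eq (hε : 0 < ε) {f g : ℝ → E}
    (hf : Integrable (fun x ↦ Real.exp (ε * |x|) • f x) μ)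
    (hg : Integrable (fun x ↦ Real.exp (ε * |x|) • g x) μ)
    (h : ∀ k : ℕ, ∫ x, x ^ k • f x ∂μ = ∫ x, x ^ k • g x ∂μ) : f =ᵐ[μ] g := by
  have hf_pow := integrable_pow_smul_of_integrable_exp_mul_abs_smul hε hf
  have hg_pow := integrable_pow_smul_of_integrable_exp_mul_abs_smul hε hg
  refine Filter.eventuallyEq_iff_sub.2 (ae_eq_zero_of_integral_pow_smul_eq_zero hε ?_ fun k ↦ ?_)
  · simpa only [Pi.sub_apply, smul_sub] using! hf.sub hg
  · simp only [Pi.sub_apply, smul_sub, integral_sub (hf_pow k) (hg_pow k), h k, sub_self]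

end VectorDensity

section PosSemidef

variable {𝕜 n : Type*} [RCLike 𝕜]

lemma sq_norm_apply_le_re_mul_re_of_posSemidef {A : Matrix n n 𝕜} (hA : A.PosSemidef) (i j : n) :
    ‖A i j‖ ^ 2 ≤ RCLike.re (A i i) * RCLike.re (A j j) := by
  have minor_nonneg := (hA.submatrix ![i, j]).det_nonneg
  rw [Matrix.det_fin_two] at minor_nonneg
  simp only [Matrix.submatrix_apply, Matrix.cons_val_zero, Matrix.cons_val_one] at minor_nonneg
  rw [← hA.1.apply j i, RCLike.star_def, RCLike.mul_conj, ← hA.1.coe_re_apply_self i,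
    ← hA.1.coe_re_apply_self j, sub_nonneg] at minor_nonneg
  exact_mod_cast minor_nonneg

variable [Fintype n]

lemma norm_apply_le_re_trace_of_posSemidef {A : Matrix n n 𝕜} (hA : A.PosSemidef) (i j : n) :
    ‖A i j‖ ≤ RCLike.re A.trace := by
  have diag_nonneg (k : n) : 0 ≤ RCLike.re (A k k) := (RCLike.nonneg_iff.1 hA.diag_nonneg).1
  have diag_le_trace (k : n) : RCLike.re (A k k) ≤ RCLike.re A.trace := by
    rw [Matrix.trace, map_sum]
    exact Finset.single_le_sum (fun l _ ↦ diag_nonneg l) (Finset.mem_univ k)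
  have trace_nonneg := (diag_nonneg i).trans (diag_le_trace i)
  refine le_of_sq_le_sq ?_ trace_nonneg
  calc ‖A i j‖ ^ 2 ≤ RCLike.re (A i i) * RCLike.re (A j j) :=
        sq_norm_apply_le_re_mul_re_of_posSemidef hA i j
    _ ≤ RCLike.re A.trace ^ 2 := by
        rw [sq]
        exact mul_le_mul (diag_le_trace i) (diag_le_trace j) (diag_nonneg j) trace_nonneg

variable {α : Type*} {m : MeasurableSpace α} {μ : Measure α} {W : α → Matrix n n 𝕜} {f : α → ℝ}

lemma integrable_smul_apply_of_posSemidef_of_trace_eq_one (hf : Integrable f μ)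
    (hW : ∀ᵐ x ∂μ, (W x).PosSemidef ∧ (W x).trace = 1) {i j : n}
    (hWmeas : AEStronglyMeasurable (fun x ↦ W x i j) μ) :
    Integrable (fun x ↦ f x • W x i j) μ :=
  hf.smul_bdd 1 hWmeas <| hW.mono fun x ⟨hpsd, htrace⟩ ↦ by
    simpa [htrace] using norm_apply_le_re_trace_of_posSemidef hpsd i j

lemma integral_eq_re_sum_integral_smul_diag (htrace : ∀ᵐ x ∂μ, (W x).trace = 1)
    (hfW : ∀ i, Integrable (fun x ↦ f x • W x i i) μ) :
    ∫ x, f x ∂μ = RCLike.re (∑ i, ∫ x, f x • W x i i ∂μ) := by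
  rw [← integral_finsetSum _ fun i _ ↦ hfW i,
    ← integral_re (integrable_finsetSum _ fun i _ ↦ hfW i)]
  refine integral_congr_ae (htrace.mono fun x hx ↦ ?_)
  have sum_diag : ∑ i, W x i i = 1 := hx
  simp [← Finset.smul_sum, RCLike.smul_re, sum_diag]

end PosSemidef

theorem matrix_measure_determinate_of_exp_tails_general {𝕜 n : Type*} [RCLike 𝕜] [Fintype n]
    {ρ ρ' : Measure ℝ} {W W' : ℝ → Matrix n n 𝕜}
    (hWmeas : ∀ i j, AEStronglyMeasurable (fun x ↦ W x i j) ρ)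
    (hW'meas : ∀ i j, AEStronglyMeasurable (fun x ↦ W' x i j) ρ')
    (hW : ∀ᵐ x ∂ρ, (W x).PosSemidef ∧ (W x).trace = 1)
    (hW' : ∀ᵐ x ∂ρ', (W' x).PosSemidef ∧ (W' x).trace = 1)
    (hexp : ∃ ε > (0 : ℝ), Integrable (fun x ↦ Real.exp (ε * |x|)) ρ)
    (hmom : ∀ k : ℕ, Integrable (fun x ↦ |x| ^ k) ρ')
    (heq : ∀ (k : ℕ) (i j : n), ∫ x, x ^ k • W x i j ∂ρ = ∫ x, x ^ k • W' x i j ∂ρ') :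
    ρ = ρ' ∧ W =ᵐ[ρ] W' := by
  obtain ⟨ε, hε, hρ⟩ := hexp
  have hρ_pow := integrable_pow_of_integrable_exp_mul_abs hε hρ
  have hρ'_pow (k : ℕ) : Integrable (fun x ↦ x ^ k) ρ' := (hmom k).mono (by fun_prop) (by simp)
  obtain rfl : ρ = ρ' := measure_eq_of_moments_eq hε hρ hρ'_pow fun k ↦ by
    rw [integral_eq_re_sum_integral_smul_diag (hW.mono fun _ ↦ And.right) fun i ↦
        integrable_smul_apply_of_posSemidef_of_trace_eq_one (hρ_pow k) hW (hWmeas i i),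
      integral_eq_re_sum_integral_smul_diag (hW'.mono fun _ ↦ And.right) fun i ↦
        integrable_smul_apply_of_posSemidef_of_trace_eq_one (hρ'_pow k) hW' (hW'meas i i)]
    simp only [heq]
  have entries_ae_eq (i j : n) : (W · i j) =ᵐ[ρ] (W' · i j) :=
    ae_eq_of_integral_pow_smul_eq hε
      (integrable_smul_apply_of_posSemidef_of_trace_eq_one hρ hW (hWmeas i j))
      (integrable_smul_apply_of_posSemidef_of_trace_eq_one hρ hW' (hW'meas i j)) (heq · i j)
  refine ⟨rfl, ?_⟩
  filter_upwards [ae_all_iff.2 fun i ↦ ae_all_iff.2 (entries_ae_eq i)] with x hx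
  exact Matrix.ext hx

/-- **Determinacy of matrix measures with exponentially decaying tails.**
A `2×2` matrix measure, encoded as a positive-semidefinite trace-one density `W` against a
finite positive Borel measure `ρ` on `ℝ`, with `∫ e^{ε|x|} dρ < ∞` for some `ε > 0`, is
uniquely determined among matrix measures with finite moments by its moment sequence. -/
theorem matrix_measure_determinate_of_exp_tails
    (ρ ρ' : Measure ℝ) [IsFiniteMeasure ρ] [IsFiniteMeasure ρ']
    (W W' : ℝ → Matrix (Fin 2) (Fin 2) ℂ)
    (hWmeas : ∀ (i j : Fin 2), Measurable fun x => W x i j)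
    (hW'meas : ∀ (i j : Fin 2), Measurable fun x => W' x i j)
    (hW : ∀ᵐ x ∂ρ, (W x).PosSemidef ∧ (W x).trace = 1)
    (hW' : ∀ᵐ x ∂ρ', (W' x).PosSemidef ∧ (W' x).trace = 1)
    (hexp : ∃ ε > (0 : ℝ), Integrable (fun x => Real.exp (ε * |x|)) ρ)
    (hmom : ∀ k : ℕ, Integrable (fun x => |x| ^ k) ρ')
    (heq : ∀ (k : ℕ) (i j : Fin 2),
      ∫ x, (x : ℂ) ^ k * W x i j ∂ρ = ∫ x, (x : ℂ) ^ k * W' x i j ∂ρ') :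
    ∀ B : Set ℝ, MeasurableSet B → ∀ i j : Fin 2,
      ∫ x in B, W x i j ∂ρ = ∫ x in B, W' x i j ∂ρ' := by
  obtain ⟨rfl, hWW'⟩ := matrix_measure_determinate_of_exp_tails_general
    (fun i j ↦ (hWmeas i j).aestronglyMeasurable) (fun i j ↦ (hW'meas i j).aestronglyMeasurable)
    hW hW' hexp hmom (by simpa using heq)
  exact fun B _ i j ↦
    integral_congr_ae (ae_restrict_of_ae (hWW'.mono fun x hx ↦ Matrix.ext_iff.2 hx i j))
end

section
/- Let μ be a finite positive Borel measure on ℝ and f ∈ L¹(μ) complex-valued, and define the Stieltjes transform m(z) = ∫ f(x)/(x − z) dμ(x) for z ∈ ℂ \ ℝ. Then: (i) m(z) = −m(−z) for all z ∈ ℂ \ ℝ if and only if the complex measure f dμ is even, i.e. ∫_{−B} f dμ = ∫_B f dμ for every Borel set B ⊆ ℝ; and (ii) m(z) = m(−z) for all z ∈ ℂ \ ℝ if and only if f dμ is odd, i.e. ∫_{−B} f dμ = −∫_B f dμ for every Borel set B ⊆ ℝ. -/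
open MeasureTheory

/-!
Smooth the distribution function of `f dμ` by the Cauchy law of scale `y > 0`. The derivative at `t`
of the smoothed function integrates the Cauchy density, i.e. the Poisson kernel, against `f dμ`; by
partial fractions it equals `(2πi)⁻¹ (m(t + iy) - m(t - iy))`. As the smoothed function vanishes at
`-∞`, it is determined by `m`, and `y → 0` recovers `∫ x in Iic t, f x ∂μ` for every `t`, hence the
whole vector measure. Since the reflection `x ↦ -x` turns `m(z)` into `-m(-z)`, the symmetries of
`m` are those of `f dμ`.
-/

open Filter ProbabilityTheory Set
open scoped NNReal Real Topology

section BoundedMultipliers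

variable {X E : Type*} [MeasurableSpace X] [NormedAddCommGroup E] [NormedSpace ℝ E]
  {μ ν : Measure X} {f g : X → E}

lemma tendsto_integral_smul_of_norm_le {ι 𝕜 : Type*} [NormedField 𝕜] [NormedSpace 𝕜 E]
    {l : Filter ι} [l.IsCountablyGenerated] {φ : ι → X → 𝕜} {ψ : X → 𝕜} {C : ℝ}
    (hf : Integrable f μ) (hφ : ∀ i, AEStronglyMeasurable (φ i) μ) (hC : ∀ i x, ‖φ i x‖ ≤ C)
    (hlim : ∀ x, Tendsto (φ · x) l (𝓝 (ψ x))) :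
    Tendsto (fun i ↦ ∫ x, φ i x • f x ∂μ) l (𝓝 (∫ x, ψ x • f x ∂μ)) := by
  refine tendsto_integral_filter_of_dominated_convergence (fun x ↦ C * ‖f x‖)
    (.of_forall fun i ↦ (hφ i).smul hf.aestronglyMeasurable)
    (.of_forall fun i ↦ ae_of_all _ fun x ↦ ?_) (hf.norm.const_mul C)
    (ae_of_all _ fun x ↦ (hlim x).smul_const (f x))
  rw [norm_smul]
  gcongr
  exact hC i x

variable {𝕜 : Type*} [RCLike 𝕜] [NormedSpace 𝕜 E]

lemma integral_simpleFunc_smul (s : SimpleFunc X 𝕜) (hf : Integrable f μ) :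
    ∫ x, s x • f x ∂μ = ∑ c ∈ s.range, c • ∫ x in s ⁻¹' {c}, f x ∂μ := by
  have hpoint (x : X) : s x • f x = ∑ c ∈ s.range, (s ⁻¹' {c}).indicator (fun x ↦ c • f x) x := by
    rw [Finset.sum_eq_single_of_mem (s x) (s.mem_range_self x) fun c _ (hc : c ≠ s x) ↦
      indicator_of_notMem (show x ∉ s ⁻¹' {c} from hc.symm) _,
      indicator_of_mem (show x ∈ s ⁻¹' {s x} from rfl)]
  simp_rw [hpoint]
  rw [integral_finsetSum _ fun c _ ↦ (hf.fun_smul c).indicator (s.measurableSet_preimage {c})]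
  exact Finset.sum_congr rfl fun c _ ↦ by
    rw [integral_indicator (s.measurableSet_preimage {c}), integral_smul]

lemma integral_smul_eq_of_withDensityᵥ_eq (hf : Integrable f μ) (hg : Integrable g ν)
    (h : μ.withDensityᵥ f = ν.withDensityᵥ g) {φ : X → 𝕜} (hφ : StronglyMeasurable φ)
    {C : ℝ} (hC : ∀ x, ‖φ x‖ ≤ C) :
    ∫ x, φ x • f x ∂μ = ∫ x, φ x • g x ∂ν := by
  let s (n : ℕ) : SimpleFunc X 𝕜 := hφ.approxBounded |C| n
  have hs_norm (n : ℕ) (x : X) : ‖s n x‖ ≤ |C| := hφ.norm_approxBounded_le (abs_nonneg C) n x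
  have hs_lim (x : X) : Tendsto (s · x) atTop (𝓝 (φ x)) :=
    hφ.tendsto_approxBounded_of_norm_le ((hC x).trans (le_abs_self C))
  have hs_integral (n : ℕ) : ∫ x, s n x • f x ∂μ = ∫ x, s n x • g x ∂ν := by
    rw [integral_simpleFunc_smul _ hf, integral_simpleFunc_smul _ hg]
    refine Finset.sum_congr rfl fun c _ ↦ ?_
    have hc := (s n).measurableSet_preimage {c}
    rw [← withDensityᵥ_apply hf hc, ← withDensityᵥ_apply hg hc, h]
  have hμ := tendsto_integral_smul_of_norm_le hf
    (fun n ↦ (s n).stronglyMeasurable.aestronglyMeasurable) hs_norm hs_lim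
  have hν := tendsto_integral_smul_of_norm_le hg
    (fun n ↦ (s n).stronglyMeasurable.aestronglyMeasurable) hs_norm hs_lim
  exact tendsto_nhds_unique (hμ.congr hs_integral) hν

end BoundedMultipliers

section CauchyCDF

/-- The distribution function of the standard Cauchy law, used as a smooth approximation of a unit
step. -/
noncomputable def cauchyCDF (u : ℝ) : ℝ := 1 / 2 + Real.arctan u / π

@[fun_prop]
lemma continuous_cauchyCDF : Continuous cauchyCDF := by
  unfold cauchyCDF
  fun_prop

lemma tendsto_cauchyCDF_atTop : Tendsto cauchyCDF atTop (𝓝 1) := by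
  have h := ((tendsto_nhds_of_tendsto_nhdsWithin Real.tendsto_arctan_atTop).div_const
    π).const_add (1 / 2)
  rwa [show 1 / 2 + π / 2 / π = 1 by field_simp; norm_num] at h

lemma tendsto_cauchyCDF_atBot : Tendsto cauchyCDF atBot (𝓝 0) := by
  have h := ((tendsto_nhds_of_tendsto_nhdsWithin Real.tendsto_arctan_atBot).div_const
    π).const_add (1 / 2)
  rwa [show 1 / 2 + -(π / 2) / π = 0 by field_simp; norm_num] at h

lemma norm_cauchyCDF_le_one (u : ℝ) : ‖cauchyCDF u‖ ≤ 1 := by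
  have hle : |Real.arctan u / π| ≤ 1 / 2 := by
    rw [abs_div, abs_of_pos Real.pi_pos, div_le_iff₀ Real.pi_pos, abs_le]
    constructor <;> linarith [Real.arctan_lt_pi_div_two u, Real.neg_pi_div_two_lt_arctan u]
  rw [Real.norm_eq_abs, abs_le]
  constructor <;> unfold cauchyCDF <;> linarith [abs_le.1 hle]

lemma hasDerivAt_cauchyCDF_sub_div {γ : ℝ≥0} (hγ : γ ≠ 0) (x t : ℝ) :
    HasDerivAt (fun t ↦ cauchyCDF ((t - x) / γ)) (cauchyPDFReal t γ x) t := by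
  have h := ((((hasDerivAt_id' t).sub_const x).div_const (γ : ℝ)).arctan.div_const π).const_add
    (1 / 2)
  refine h.congr_deriv ?_
  rw [cauchyPDFReal_def]
  field_simp
  ring

/-- The perturbation `t + δ` of the jump point, which is large compared with the width `δ ^ 2`,
makes the limit at `x = t` equal to `1` rather than `1 / 2`. -/
lemma tendsto_cauchyCDF_indicator_Iic (t x : ℝ) :
    Tendsto (fun δ : ℝ ↦ cauchyCDF ((t + δ - x) / δ ^ 2)) (𝓝[>] 0)
      (𝓝 ((Iic t).indicator 1 x)) := by
  have hinv : Tendsto (fun δ : ℝ ↦ δ⁻¹) (𝓝[>] 0) atTop := tendsto_inv_nhdsGT_zero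
  by_cases hx : x ≤ t
  · rw [indicator_of_mem (mem_Iic.2 hx), Pi.one_apply]
    refine tendsto_cauchyCDF_atTop.comp (tendsto_atTop_mono' _ ?_ hinv)
    filter_upwards [self_mem_nhdsWithin] with δ (hδ : 0 < δ)
    rw [show δ⁻¹ = δ / δ ^ 2 by field_simp]
    gcongr
    linarith
  · rw [indicator_of_notMem (by simpa using hx)]
    have hnum : Tendsto (fun δ : ℝ ↦ t + δ - x) (𝓝[>] 0) (𝓝 (t - x)) := by
      have : Continuous fun δ : ℝ ↦ t + δ - x := by fun_prop
      simpa using (this.tendsto 0).mono_left nhdsWithin_le_nhds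
    have hdiv := hnum.neg_mul_atTop (sub_neg.2 (not_le.1 hx))
      ((tendsto_pow_atTop two_ne_zero).comp hinv)
    exact tendsto_cauchyCDF_atBot.comp (hdiv.congr fun δ ↦ by simp [div_eq_mul_inv])

end CauchyCDF

section SmoothedCDF

variable {E : Type*} [NormedAddCommGroup E] [NormedSpace ℝ E] {μ : Measure ℝ} {f : ℝ → E}

/-- The distribution function `t ↦ ∫ x in Iic t, f x ∂μ` of the vector measure `f dμ`, convolved
with the Cauchy law of scale `y`. -/
noncomputable def smoothedCDF (μ : Measure ℝ) (f : ℝ → E) (y t : ℝ) : E :=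
  ∫ x, cauchyCDF ((t - x) / y) • f x ∂μ

lemma tendsto_smoothedCDF_atBot (hf : Integrable f μ) {y : ℝ} (hy : 0 < y) :
    Tendsto (smoothedCDF μ f y) atBot (𝓝 0) := by
  have hlim (x : ℝ) : Tendsto (fun t ↦ cauchyCDF ((t - x) / y)) atBot (𝓝 0) :=
    tendsto_cauchyCDF_atBot.comp
      ((tendsto_atBot_add_const_right _ (-x) tendsto_id).atBot_div_const hy)
  unfold smoothedCDF
  simpa using tendsto_integral_smul_of_norm_le hf (fun t ↦ by fun_prop)
    (fun t x ↦ norm_cauchyCDF_le_one _) hlim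

lemma tendsto_smoothedCDF_atTop (hf : Integrable f μ) {y : ℝ} (hy : 0 < y) :
    Tendsto (smoothedCDF μ f y) atTop (𝓝 (∫ x, f x ∂μ)) := by
  have hlim (x : ℝ) : Tendsto (fun t ↦ cauchyCDF ((t - x) / y)) atTop (𝓝 1) :=
    tendsto_cauchyCDF_atTop.comp
      ((tendsto_atTop_add_const_right _ (-x) tendsto_id).atTop_div_const hy)
  unfold smoothedCDF
  simpa using tendsto_integral_smul_of_norm_le hf (fun t ↦ by fun_prop)
    (fun t x ↦ norm_cauchyCDF_le_one _) hlim

lemma tendsto_smoothedCDF_setIntegral_Iic (hf : Integrable f μ) (t : ℝ) :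
    Tendsto (fun δ ↦ smoothedCDF μ f (δ ^ 2) (t + δ)) (𝓝[>] 0) (𝓝 (∫ x in Iic t, f x ∂μ)) := by
  have hind : ∫ x in Iic t, f x ∂μ = ∫ x, (Iic t).indicator (1 : ℝ → ℝ) x • f x ∂μ := by
    simp [← integral_indicator measurableSet_Iic, ← indicator_smul_apply_left]
  rw [hind]
  exact tendsto_integral_smul_of_norm_le hf (fun δ ↦ by fun_prop)
    (fun δ x ↦ norm_cauchyCDF_le_one _) (tendsto_cauchyCDF_indicator_Iic t)

lemma hasDerivAt_smoothedCDF (hf : Integrable f μ) {γ : ℝ≥0} (hγ : γ ≠ 0) (t : ℝ) :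
    HasDerivAt (smoothedCDF μ f γ) (∫ x, cauchyPDFReal t γ x • f x ∂μ) t := by
  have hbound (x t : ℝ) : ‖cauchyPDFReal t γ x‖ ≤ π⁻¹ * (γ : ℝ)⁻¹ := by
    rw [Real.norm_of_nonneg (cauchyPDF_pos t hγ x).le, cauchyPDFReal_def']
    refine mul_le_of_le_one_right (by positivity) (inv_le_one_of_one_le₀ ?_)
    exact le_add_of_nonneg_right (sq_nonneg _)
  refine (hasDerivAt_integral_of_dominated_loc_of_deriv_le (s := univ)
    (bound := fun x ↦ π⁻¹ * (γ : ℝ)⁻¹ * ‖f x‖) univ_mem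
    (.of_forall fun t ↦ ?_) ?_ ?_ (ae_of_all _ fun x t _ ↦ ?_) (hf.norm.const_mul _)
    (ae_of_all _ fun x t _ ↦ (hasDerivAt_cauchyCDF_sub_div hγ x t).smul_const (f x))).2
  · exact AEStronglyMeasurable.smul (by fun_prop) hf.aestronglyMeasurable
  · exact hf.bdd_smul 1 (by fun_prop) (ae_of_all _ fun x ↦ norm_cauchyCDF_le_one _)
  · exact (stronglyMeasurable_cauchyPDFReal t γ).aestronglyMeasurable.smul hf.aestronglyMeasurable
  · rw [norm_smul]
    gcongr
    exact hbound x t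

end SmoothedCDF

section StieltjesTransform

variable {E : Type*} [NormedAddCommGroup E] [NormedSpace ℂ E] {μ ν : Measure ℝ} {f g : ℝ → E}

/-- The Stieltjes transform `m(z) = ∫ f(x) / (x - z) dμ(x)` of the vector measure `f dμ`, with
values in a complex normed space; it is meaningful for `z` off the real line. -/
noncomputable def stieltjesTransform (μ : Measure ℝ) (f : ℝ → E) (z : ℂ) : E :=
  ∫ x, ((x : ℂ) - z)⁻¹ • f x ∂μ

lemma stieltjesTransform_neg (z : ℂ) : stieltjesTransform μ (-f) z = -stieltjesTransform μ f z := by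
  simp [stieltjesTransform, integral_neg]

lemma norm_inv_ofReal_sub_le (x : ℝ) {z : ℂ} (hz : z.im ≠ 0) :
    ‖((x : ℂ) - z)⁻¹‖ ≤ |z.im|⁻¹ := by
  rw [norm_inv]
  gcongr
  simpa using Complex.abs_im_le_norm ((x : ℂ) - z)

lemma integrable_inv_ofReal_sub_smul (hf : Integrable f μ) {z : ℂ} (hz : z.im ≠ 0) :
    Integrable (fun x : ℝ ↦ ((x : ℂ) - z)⁻¹ • f x) μ :=
  hf.bdd_smul |z.im|⁻¹ (Measurable.aestronglyMeasurable (by fun_prop))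
    (ae_of_all _ fun x ↦ norm_inv_ofReal_sub_le x hz)

lemma ofReal_cauchyPDFReal_eq_inv_sub_inv (t : ℝ) {γ : ℝ≥0} (hγ : γ ≠ 0) (x : ℝ) :
    (cauchyPDFReal t γ x : ℂ) = (2 * π * Complex.I)⁻¹ *
      (((x : ℂ) - (t + γ * Complex.I))⁻¹ - ((x : ℂ) - (t - γ * Complex.I))⁻¹) := by
  have hplus : (x : ℂ) - (t + γ * Complex.I) ≠ 0 := fun h ↦
    hγ (by simpa using congrArg Complex.im h)
  have hminus : (x : ℂ) - (t - γ * Complex.I) ≠ 0 := fun h ↦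
    hγ (by simpa using congrArg Complex.im h)
  have hfactor : ((x : ℂ) - t) ^ 2 + γ ^ 2 =
      (x - (t + γ * Complex.I)) * (x - (t - γ * Complex.I)) := by
    linear_combination (γ : ℂ) ^ 2 * Complex.I_sq
  rw [cauchyPDFReal_def]
  push_cast
  rw [hfactor]
  field_simp
  ring

lemma hasDerivAt_smoothedCDF_stieltjesTransform (hf : Integrable f μ) {γ : ℝ≥0} (hγ : γ ≠ 0)
    (t : ℝ) :
    HasDerivAt (smoothedCDF μ f γ) ((2 * π * Complex.I : ℂ)⁻¹ •
      (stieltjesTransform μ f (t + γ * Complex.I) -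
        stieltjesTransform μ f (t - γ * Complex.I))) t := by
  convert hasDerivAt_smoothedCDF hf hγ t using 1
  rw [stieltjesTransform, stieltjesTransform,
    ← integral_sub (integrable_inv_ofReal_sub_smul hf (by simpa using hγ))
      (integrable_inv_ofReal_sub_smul hf (by simpa using hγ)), ← integral_smul]
  refine integral_congr_ae (ae_of_all _ fun x ↦ ?_)
  simp only
  rw [← Complex.coe_smul (cauchyPDFReal t γ x), ofReal_cauchyPDFReal_eq_inv_sub_inv t hγ, mul_smul,
    sub_smul]

lemma smoothedCDF_eq_of_stieltjesTransform_eq (hf : Integrable f μ) (hg : Integrable g ν)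
    (h : ∀ z : ℂ, z.im ≠ 0 → stieltjesTransform μ f z = stieltjesTransform ν g z)
    {y : ℝ} (hy : 0 < y) : smoothedCDF μ f y = smoothedCDF ν g y := by
  lift y to ℝ≥0 using hy.le
  have hy' : y ≠ 0 := NNReal.coe_pos.1 hy |>.ne'
  have hderiv (t : ℝ) : HasDerivAt (smoothedCDF μ f y - smoothedCDF ν g y) 0 t := by
    convert (hasDerivAt_smoothedCDF_stieltjesTransform hf hy' t).sub
      (hasDerivAt_smoothedCDF_stieltjesTransform hg hy' t) using 1
    rw [h (t + y * Complex.I) (by simpa using hy'),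
      h (t - y * Complex.I) (by simpa using hy'), sub_self]
  have hlim : Tendsto (smoothedCDF μ f y - smoothedCDF ν g y) atBot (𝓝 0) := by
    rw [← sub_zero (0 : E)]
    exact (tendsto_smoothedCDF_atBot hf hy).sub (tendsto_smoothedCDF_atBot hg hy)
  funext t
  have hconst : Tendsto (smoothedCDF μ f y - smoothedCDF ν g y) atBot
      (𝓝 (smoothedCDF μ f y t - smoothedCDF ν g y t)) :=
    tendsto_const_nhds.congr fun s ↦ is_const_of_deriv_eq_zero
      (fun s ↦ (hderiv s).differentiableAt) (fun s ↦ (hderiv s).deriv) t s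
  exact sub_eq_zero.1 (tendsto_nhds_unique hconst hlim)

theorem withDensityᵥ_eq_of_stieltjesTransform_eq (hf : Integrable f μ) (hg : Integrable g ν)
    (h : ∀ z : ℂ, z.im ≠ 0 → stieltjesTransform μ f z = stieltjesTransform ν g z) :
    μ.withDensityᵥ f = ν.withDensityᵥ g := by
  have hcdf {y : ℝ} (hy : 0 < y) := smoothedCDF_eq_of_stieltjesTransform_eq hf hg h hy
  refine VectorMeasure.ext_of_generateFrom (range Iic) ?_
    (BorelSpace.measurable_eq.trans (borel_eq_generateFrom_Iic ℝ)) isPiSystem_Iic ?_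
  · rintro _ ⟨t, rfl⟩
    rw [withDensityᵥ_apply hf measurableSet_Iic, withDensityᵥ_apply hg measurableSet_Iic]
    refine tendsto_nhds_unique_of_eventuallyEq (tendsto_smoothedCDF_setIntegral_Iic hf t)
      (tendsto_smoothedCDF_setIntegral_Iic hg t) ?_
    filter_upwards [self_mem_nhdsWithin] with δ (hδ : 0 < δ)
    rw [hcdf (by positivity)]
  · rw [withDensityᵥ_apply hf .univ, withDensityᵥ_apply hg .univ, setIntegral_univ,
      setIntegral_univ]
    exact tendsto_nhds_unique (tendsto_smoothedCDF_atTop hf one_pos)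
      (hcdf one_pos ▸ tendsto_smoothedCDF_atTop hg one_pos)

theorem stieltjesTransform_eq_iff_withDensityᵥ_eq (hf : Integrable f μ) (hg : Integrable g ν) :
    (∀ z : ℂ, z.im ≠ 0 → stieltjesTransform μ f z = stieltjesTransform ν g z) ↔
      μ.withDensityᵥ f = ν.withDensityᵥ g :=
  ⟨withDensityᵥ_eq_of_stieltjesTransform_eq hf hg, fun h z hz ↦
    integral_smul_eq_of_withDensityᵥ_eq hf hg h (Measurable.stronglyMeasurable (by fun_prop))
      (norm_inv_ofReal_sub_le · hz)⟩

theorem stieltjesTransform_eq_iff_forall_setIntegral_eq (hf : Integrable f μ)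
    (hg : Integrable g ν) :
    (∀ z : ℂ, z.im ≠ 0 → stieltjesTransform μ f z = stieltjesTransform ν g z) ↔
      ∀ B : Set ℝ, MeasurableSet B → ∫ x in B, f x ∂μ = ∫ x in B, g x ∂ν := by
  rw [stieltjesTransform_eq_iff_withDensityᵥ_eq hf hg, VectorMeasure.ext_iff]
  exact forall₂_congr fun B hB ↦ by rw [withDensityᵥ_apply hf hB, withDensityᵥ_apply hg hB]

end StieltjesTransform

section Reflection

variable {G E : Type*} [MeasurableSpace G] [InvolutiveNeg G] [MeasurableNeg G]
  [NormedAddCommGroup E]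

lemma integrable_map_neg_comp_neg {μ : Measure G} {f : G → E} (hf : Integrable f μ) :
    Integrable (fun x ↦ f (-x)) (μ.map Neg.neg) := by
  refine (MeasurableEquiv.neg G).measurableEmbedding.integrable_map_iff.2 ?_
  simpa [Function.comp_def] using hf

lemma setIntegral_map_neg_comp_neg [NormedSpace ℝ E] (μ : Measure G) (f : G → E) (B : Set G) :
    ∫ x in B, f (-x) ∂μ.map Neg.neg = ∫ x in -B, f x ∂μ := by
  simpa using (MeasurableEquiv.neg G).measurableEmbedding.setIntegral_map (fun x ↦ f (-x)) B

lemma stieltjesTransform_map_neg_comp_neg [NormedSpace ℂ E] (μ : Measure ℝ) (f : ℝ → E) (z : ℂ) :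
    stieltjesTransform (μ.map Neg.neg) (fun x ↦ f (-x)) z = -stieltjesTransform μ f (-z) := by
  have hmap := (MeasurableEquiv.neg ℝ).measurableEmbedding.integral_map (μ := μ)
    fun x ↦ ((x : ℂ) - z)⁻¹ • f (-x)
  rw [stieltjesTransform, stieltjesTransform, ← integral_neg]
  refine hmap.trans (integral_congr_ae (ae_of_all _ fun x ↦ ?_))
  have hinv : ((-x : ℝ) - z : ℂ)⁻¹ = -((x : ℂ) - -z)⁻¹ := by
    rw [← inv_neg]
    congr 1
    push_cast
    ring
  change ((-x : ℝ) - z : ℂ)⁻¹ • f (- -x) = _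
  rw [hinv, neg_neg, neg_smul]

end Reflection

theorem stieltjes_transform_parity_general {E : Type*} [NormedAddCommGroup E] [NormedSpace ℂ E]
    [CompleteSpace E] (μ : Measure ℝ) (f : ℝ → E) (hf : Integrable f μ) :
    ((∀ z : ℂ, z.im ≠ 0 → stieltjesTransform μ f z = -stieltjesTransform μ f (-z)) ↔
      (∀ B : Set ℝ, MeasurableSet B → ∫ x in -B, f x ∂μ = ∫ x in B, f x ∂μ)) ∧
    ((∀ z : ℂ, z.im ≠ 0 → stieltjesTransform μ f z = stieltjesTransform μ f (-z)) ↔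
      (∀ B : Set ℝ, MeasurableSet B → ∫ x in -B, f x ∂μ = -∫ x in B, f x ∂μ)) := by
  have hrefl : Integrable (fun x ↦ f (-x)) (μ.map Neg.neg) := integrable_map_neg_comp_neg hf
  have heven := stieltjesTransform_eq_iff_forall_setIntegral_eq hf hrefl
  have hodd := stieltjesTransform_eq_iff_forall_setIntegral_eq hf hrefl.neg
  simp only [stieltjesTransform_neg, Pi.neg_apply, integral_neg,
    stieltjesTransform_map_neg_comp_neg, setIntegral_map_neg_comp_neg, neg_neg] at heven hodd
  constructor
  · rw [heven]
    exact forall₂_congr fun B _ ↦ eq_comm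
  · rw [hodd]
    exact forall₂_congr fun B _ ↦ eq_comm.trans neg_eq_iff_eq_neg

/-- **Parity symmetries of Stieltjes transforms of complex measures.**
For a complex measure `f dμ` on `ℝ` with Stieltjes transform
`m(z) = ∫ f(x)/(x − z) dμ(x)` (`z ∈ ℂ \ ℝ`):
(i) `m(z) = −m(−z)` for all `z` iff `f dμ` is even, and
(ii) `m(z) = m(−z)` for all `z` iff `f dμ` is odd. -/
theorem stieltjes_transform_parity
    (μ : Measure ℝ) [IsFiniteMeasure μ] (f : ℝ → ℂ) (hf : Integrable f μ) :
    ((∀ z : ℂ, z.im ≠ 0 →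
        (∫ x, f x / ((x : ℂ) - z) ∂μ) = -∫ x, f x / ((x : ℂ) - (-z)) ∂μ) ↔
      (∀ B : Set ℝ, MeasurableSet B → ∫ x in -B, f x ∂μ = ∫ x in B, f x ∂μ)) ∧
    ((∀ z : ℂ, z.im ≠ 0 →
        (∫ x, f x / ((x : ℂ) - z) ∂μ) = ∫ x, f x / ((x : ℂ) - (-z)) ∂μ) ↔
      (∀ B : Set ℝ, MeasurableSet B → ∫ x in -B, f x ∂μ = -∫ x in B, f x ∂μ)) := by
  simpa only [stieltjesTransform, smul_eq_mul, inv_mul_eq_div] using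
    stieltjes_transform_parity_general μ f hf
end

section
/- Let z ∈ ℂ with Im z > 0 and set w = z², and let w^{1/4} denote the fourth root of w with arg(w^{1/4}) ∈ (0, π/2), so that (w^{1/4})² = z. Let M, M̃ ∈ M₂(ℂ) satisfy M₁₁ = 1 + w·M₀₀ and M̃₁₁ = 1 + w·M̃₀₀. Define R to be the matrix with entries [z·M₀₀, M₁₀; M₀₁, z·M₀₀] and R̃ analogously from M̃. Then the operator norms satisfy ‖R − R̃‖ = ‖D (M − M̃) D‖, where D = diag(w^{1/4}, w^{−1/4}). -/
open Real Matrix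

/-!
The identity rests on `R - R' = (D (M - M') D)ᵀ`: the common constant term cancels in
`M₁₁ - M'₁₁ = w (M₀₀ - M'₀₀)`, so both diagonal entries of `D (M - M') D` equal
`z (M₀₀ - M'₀₀)`, while the off-diagonal entries are unchanged. The operator norm is invariant
under transposition because `Aᵀ` and `Aᴴ` differ by entrywise conjugation, which preserves the
Euclidean norm.
-/

section OperatorNorm

open WithLp
open scoped Matrix.Norms.L2Operator

lemma norm_toLp_star {p : ENNReal} [Fact (1 ≤ p)] {ι E : Type*} [Fintype ι]
    [SeminormedAddCommGroup E] [StarAddMonoid E] [NormedStarGroup E] (x : ι → E) :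
    ‖toLp p (star x)‖ = ‖toLp p x‖ := by
  obtain rfl | hp := p.dichotomy
  · simp only [PiLp.norm_eq_ciSup, Pi.star_apply, norm_star]
  · simp only [PiLp.norm_eq_sum (zero_lt_one.trans_le hp), Pi.star_apply, norm_star]

lemma transpose_mulVec_eq_star_conjTranspose_mulVec_star {α m n : Type*}
    [NonUnitalCommSemiring α] [StarRing α] [Fintype m] (A : Matrix m n α) (x : m → α) :
    Aᵀ *ᵥ x = star (Aᴴ *ᵥ star x) := by
  rw [star_mulVec, star_star, conjTranspose_conjTranspose, mulVec_transpose]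

variable {𝕜 m n : Type*} [RCLike 𝕜] [Fintype m] [Fintype n] [DecidableEq m] [DecidableEq n]

lemma l2_opNorm_transpose_le (A : Matrix m n 𝕜) : ‖Aᵀ‖ ≤ ‖A‖ := by
  rw [l2_opNorm_def]
  refine ContinuousLinearMap.opNorm_le_bound _ (norm_nonneg A) fun x ↦ ?_
  calc ‖toLp 2 (Aᵀ *ᵥ ofLp x)‖ = ‖toLp 2 (Aᴴ *ᵥ star (ofLp x))‖ := by
        rw [transpose_mulVec_eq_star_conjTranspose_mulVec_star, norm_toLp_star]
    _ ≤ ‖Aᴴ‖ * ‖toLp 2 (star (ofLp x))‖ := l2_opNorm_mulVec Aᴴ (toLp 2 (star (ofLp x)))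
    _ = ‖A‖ * ‖x‖ := by rw [l2_opNorm_conjTranspose, norm_toLp_star]

lemma l2_opNorm_transpose (A : Matrix m n 𝕜) : ‖Aᵀ‖ = ‖A‖ :=
  (l2_opNorm_transpose_le A).antisymm (l2_opNorm_transpose_le Aᵀ)

end OperatorNorm

/-- The Weyl matrix `R` at `z` of the self-adjoint block Jacobi matrix associated with a Jacobi
matrix whose Weyl matrix at `z ^ 2` is `M`. It is encoded as a function of an arbitrary `2 × 2`
matrix `M`, ignoring `M 1 1`, which makes it linear in `M`. -/
def blockWeylMatrix {α : Type*} [Mul α] (z : α) (M : Matrix (Fin 2) (Fin 2) α) :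
    Matrix (Fin 2) (Fin 2) α :=
  !![z * M 0 0, M 1 0; M 0 1, z * M 0 0]

lemma blockWeylMatrix_sub {α : Type*} [NonUnitalNonAssocRing α] (z : α)
    (M M' : Matrix (Fin 2) (Fin 2) α) :
    blockWeylMatrix z (M - M') = blockWeylMatrix z M - blockWeylMatrix z M' := by
  simp [blockWeylMatrix, mul_sub]

lemma diag_mul_mul_diag_fin_two {α : Type*} [NonUnitalNonAssocSemiring α] (a b c d : α)
    (A : Matrix (Fin 2) (Fin 2) α) :
    !![a, 0; 0, b] * A * !![c, 0; 0, d] =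
      !![a * A 0 0 * c, a * A 0 1 * d; b * A 1 0 * c, b * A 1 1 * d] := by
  rw [A.eta_fin_two, mul_fin_two, mul_fin_two]
  simp

lemma blockWeylMatrix_sq_eq_transpose_diag_mul_mul_diag {K : Type*} [Field K] {ζ : K}
    (hζ : ζ ≠ 0) {A : Matrix (Fin 2) (Fin 2) K} (hA : A 1 1 = ζ ^ 4 * A 0 0) :
    blockWeylMatrix (ζ ^ 2) A = (!![ζ, 0; 0, ζ⁻¹] * A * !![ζ, 0; 0, ζ⁻¹])ᵀ := by
  have upper_left : ζ * A 0 0 * ζ = ζ ^ 2 * A 0 0 := by ring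
  have upper_right : ζ * A 0 1 * ζ⁻¹ = A 0 1 := by field_simp
  have lower_left : ζ⁻¹ * A 1 0 * ζ = A 1 0 := by field_simp
  have lower_right : ζ⁻¹ * A 1 1 * ζ⁻¹ = ζ ^ 2 * A 0 0 := by rw [hA]; field_simp
  rw [diag_mul_mul_diag_fin_two, upper_left, upper_right, lower_left, lower_right]
  exact transposeᵣ_eq !![ζ ^ 2 * A 0 0, A 0 1; A 1 0, ζ ^ 2 * A 0 0]

theorem weyl_matrix_norm_identity_general {𝕜 : Type*} [RCLike 𝕜] {z w ζ c : 𝕜}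
    (hw : w = z ^ 2) (hζ : ζ ^ 2 = z) (hζ₀ : ζ ≠ 0) {M M' : Matrix (Fin 2) (Fin 2) 𝕜}
    (hM : M 1 1 = c + w * M 0 0) (hM' : M' 1 1 = c + w * M' 0 0) :
    ‖toEuclideanCLM (𝕜 := 𝕜) (blockWeylMatrix z M - blockWeylMatrix z M')‖ =
      ‖toEuclideanCLM (𝕜 := 𝕜) (!![ζ, 0; 0, ζ⁻¹] * (M - M') * !![ζ, 0; 0, ζ⁻¹])‖ := by
  have diff_lower_right : (M - M') 1 1 = ζ ^ 4 * (M - M') 0 0 := by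
    rw [Matrix.sub_apply, Matrix.sub_apply, hM, hM', hw, ← hζ]
    ring
  rw [← blockWeylMatrix_sub, ← hζ,
    blockWeylMatrix_sq_eq_transpose_diag_mul_mul_diag hζ₀ diff_lower_right]
  exact l2_opNorm_transpose _

/-- **The key norm identity relating the Weyl matrix `M` at `w = z²` to the block Weyl
matrix `R` at `z`.** Let `Im z > 0`, `w = z²`, and let `ζ = w^{1/4}` be the fourth root of
`w` with `arg ζ ∈ (0, π/2)`, so `ζ² = z`. If `M₁₁ = 1 + w·M₀₀` and likewise for `M̃`, and
`R = [[z·M₀₀, M₁₀],[M₀₁, z·M₀₀]]`, `R̃` analogously, then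
`‖R − R̃‖ = ‖D (M − M̃) D‖` for `D = diag(ζ, ζ⁻¹)`, in the operator norm. -/
theorem weyl_matrix_norm_identity
    (z : ℂ) (hz : 0 < z.im) (w : ℂ) (hw : w = z ^ 2)
    (ζ : ℂ) (hζarg : ζ.arg ∈ Set.Ioo 0 (π / 2)) (hζ : ζ ^ 2 = z)
    (M M' : Matrix (Fin 2) (Fin 2) ℂ)
    (hM : M 1 1 = 1 + w * M 0 0) (hM' : M' 1 1 = 1 + w * M' 0 0)
    (R R' D : Matrix (Fin 2) (Fin 2) ℂ)
    (hR : R = !![z * M 0 0, M 1 0; M 0 1, z * M 0 0])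
    (hR' : R' = !![z * M' 0 0, M' 1 0; M' 0 1, z * M' 0 0])
    (hD : D = !![ζ, 0; 0, ζ⁻¹]) :
    ‖toEuclideanCLM (𝕜 := ℂ) (R - R')‖ = ‖toEuclideanCLM (𝕜 := ℂ) (D * (M - M') * D)‖ := by
  have hζ₀ : ζ ≠ 0 := fun h ↦ hζarg.1.ne' (h ▸ Complex.arg_zero)
  subst hR hR' hD
  exact weyl_matrix_norm_identity_general hw hζ hζ₀ hM hM'
end

section
/- Let T be a densely defined closed operator on a complex Hilbert space H, let z ∈ ℂ \ ℝ, and suppose R, S : H → H are continuous linear maps such that: R x ∈ D(T*T) and T*T(Rx) − z·Rx = x for all x ∈ H, R(T*Tu − zu) = u for all u ∈ D(T*T); and S x ∈ D(TT*) and TT*(Sx) − z·Sx = x for all x ∈ H, S(TT*v − zv) = v for all v ∈ D(TT*). Then for every ψ ∈ D(T), one has Rψ ∈ D(T) and T(Rψ) = S(Tψ). -/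
open scoped InnerProductSpace

section

variable {𝕜 M N : Type*} [Ring 𝕜] [AddCommGroup M] [Module 𝕜 M] [AddCommGroup N] [Module 𝕜 N]
  (A : M →ₗ.[𝕜] N) (B : N →ₗ.[𝕜] M) (z : 𝕜)

theorem linearPMap_map_comp_sub_smul (u : A.domain) (hAu : A u ∈ B.domain)
    (h : B ⟨A u, hAu⟩ - z • (u : M) ∈ A.domain) :
    ∃ hBAu : B ⟨A u, hAu⟩ ∈ A.domain,
      A ⟨B ⟨A u, hAu⟩ - z • (u : M), h⟩ = A ⟨B ⟨A u, hAu⟩, hBAu⟩ - z • A u := by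
  have hBAu : B ⟨A u, hAu⟩ ∈ A.domain :=
    (A.domain.sub_mem_iff_left (A.domain.smul_mem z u.2)).mp h
  refine ⟨hBAu, ?_⟩
  rw [← A.map_smul, ← A.map_sub]
  rfl

theorem resolvent_intertwining_general (R : M → M) (S : N → N)
    (hR : ∀ x : M, ∃ (h1 : R x ∈ A.domain) (h2 : A ⟨R x, h1⟩ ∈ B.domain),
      B ⟨A ⟨R x, h1⟩, h2⟩ - z • R x = x)
    (hS : ∀ (v : N) (h1 : v ∈ B.domain) (h2 : B ⟨v, h1⟩ ∈ A.domain),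
      S (A ⟨B ⟨v, h1⟩, h2⟩ - z • v) = v)
    (x : M) (hx : x ∈ A.domain) :
    ∃ h1 : R x ∈ A.domain, A ⟨R x, h1⟩ = S (A ⟨x, hx⟩) := by
  obtain ⟨hRx, hARx, hres⟩ := hR x
  obtain ⟨hBARx, hmap⟩ :=
    linearPMap_map_comp_sub_smul A B z ⟨R x, hRx⟩ hARx (hres.symm ▸ hx)
  refine ⟨hRx, ?_⟩
  calc A ⟨R x, hRx⟩
      = S (A ⟨B ⟨A ⟨R x, hRx⟩, hARx⟩, hBARx⟩ - z • A ⟨R x, hRx⟩) := (hS _ hARx hBARx).symm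
    _ = S (A ⟨x, hx⟩) := by simp only [← hmap, hres]

end

/-- **Resolvent intertwining relation** `T·R_{T*T}(z) = R_{TT*}(z)·T` on `D(T)`
(Lemma 3.3): if `T` is a densely defined closed operator on a complex Hilbert space, `R`
is the resolvent of `T*T` at `z ∈ ℂ \ ℝ` and `S` the resolvent of `TT*` at `z`, then for
every `ψ ∈ D(T)` one has `Rψ ∈ D(T)` and `T(Rψ) = S(Tψ)`. -/
theorem resolvent_intertwining
    {E : Type*} [NormedAddCommGroup E] [InnerProductSpace ℂ E] [CompleteSpace E]
    (T : E →ₗ.[ℂ] E) (hdense : Dense (T.domain : Set E)) (hclosed : T.IsClosed)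
    (z : ℂ) (hz : z.im ≠ 0) (R S : E →L[ℂ] E)
    (hR1 : ∀ x : E, ∃ (h1 : R x ∈ T.domain) (h2 : T ⟨R x, h1⟩ ∈ T.adjoint.domain),
      T.adjoint ⟨T ⟨R x, h1⟩, h2⟩ - z • R x = x)
    (hR2 : ∀ (u : E) (h1 : u ∈ T.domain) (h2 : T ⟨u, h1⟩ ∈ T.adjoint.domain),
      R (T.adjoint ⟨T ⟨u, h1⟩, h2⟩ - z • u) = u)
    (hS1 : ∀ x : E, ∃ (h1 : S x ∈ T.adjoint.domain) (h2 : T.adjoint ⟨S x, h1⟩ ∈ T.domain),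
      T ⟨T.adjoint ⟨S x, h1⟩, h2⟩ - z • S x = x)
    (hS2 : ∀ (v : E) (h1 : v ∈ T.adjoint.domain) (h2 : T.adjoint ⟨v, h1⟩ ∈ T.domain),
      S (T ⟨T.adjoint ⟨v, h1⟩, h2⟩ - z • v) = v)
    (ψ : E) (hψ : ψ ∈ T.domain) :
    ∃ h1 : R ψ ∈ T.domain, T ⟨R ψ, h1⟩ = S (T ⟨ψ, hψ⟩) :=
  resolvent_intertwining_general T T.adjoint z R S hR1 hS2 ψ hψ
end
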